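/- Suppose n is odd. Then for all integers i, j with 0 ≤ i ≤ n and 0 ≤ j ≤ (n−1)/2 (note i−j = n/2 is impossible since n is odd), the following identities hold in A: (1) O(2n−i, i)·O(n−j, j) = (−1)^{i(j−1)} O(3n−i−j, i+j) + (−1)^{ij} λ^j O(2n−i+j, n+i−j) if i−j < n/2, and = (−1)^{i(j−1)} O(3n−i−j, i+j) + (−1)^{ij} λ^i O(n+i−j, 2n+j−i) if i−j > n/2; (2) O(n−j, j)·O(2n−i, i) = (−1)^{ij} O(3n−i−j, i+j) + (−1)^{i(j−1)} λ^j O(2n−i+j, n+i−j) if i−j < n/2, and = (−1)^{ij} O(3n−i−j, i+j) + (−1)^{i(j−1)} λ^i O(n+i−j, 2n+j−i) if i−j > n/2. -/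

import Mathlib

/-!
Setting: `lam n = exp(2πi/n)` is a primitive `n`-th root of unity in `ℂ`.
`SkewAlg` is the `(-1)`-skew polynomial ring `A = ℂ⟨u,v⟩/(uv+vu)`, with
generators `uGen`, `vGen`.  The automorphism `g` (of order `2n`) is determined
by `g u = v`, `g v = lam n • u`, and generates the cyclic group `G`, so that
the fixed subring `A^G` is `{a | g a = a}`.  The orbit sum is
`orbitSum n a b = u^a v^b + (-1)^(a*b) * (lam n)^b • (u^b v^a)`.
-/

noncomputable section

/-- `lam n = exp(2πi/n)`, a primitive `n`-th root of unity. -/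
def lam (n : ℕ) : ℂ := Complex.exp (2 * (Real.pi : ℂ) * Complex.I / (n : ℂ))

/-- The defining relation of the `(-1)`-skew polynomial ring: `uv + vu = 0`. -/
inductive SkewRel : FreeAlgebra ℂ (Fin 2) → FreeAlgebra ℂ (Fin 2) → Prop
  | rel : SkewRel (FreeAlgebra.ι ℂ 0 * FreeAlgebra.ι ℂ 1 + FreeAlgebra.ι ℂ 1 * FreeAlgebra.ι ℂ 0) 0

/-- The skew polynomial ring `A = ℂ⟨u,v⟩/(uv+vu)`. -/
abbrev SkewAlg : Type := RingQuot SkewRel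

/-- The generator `u` of `A`. -/
def uGen : SkewAlg := RingQuot.mkAlgHom ℂ SkewRel (FreeAlgebra.ι ℂ 0)

/-- The generator `v` of `A`. -/
def vGen : SkewAlg := RingQuot.mkAlgHom ℂ SkewRel (FreeAlgebra.ι ℂ 1)

/-- Orbit sum `O(a,b) = u^a v^b + (-1)^(ab) λ^b u^b v^a`. -/
def orbitSum (n a b : ℕ) : SkewAlg :=
  uGen ^ a * vGen ^ b + ((-1 : ℂ) ^ (a * b) * lam n ^ b) • (uGen ^ b * vGen ^ a)

/-!
Since `g(u^a v^b) = (-1)^(ab) λ^b u^b v^a`, the orbit sum `O(a,b)` is the trace `x + g x` of the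
monomial `x = u^a v^b`, and `g² x = λ^(a+b) x`.  If `g² y = y`, then
`(x + g x)(y + g y) = (xy + g(xy)) + (x g(y) + g(x g(y)))`, so a product of two orbit sums of
degrees divisible by `n` is a combination of two orbit sums, read off from the monomials `xy` and
`x g(y)`.  The two forms of the second summand differ by the symmetry
`O(a,b) = (-1)^(ab) λ^b O(b,a)`, which is the invariance of the trace under `g`.
-/

section GeneralAlgebra

variable {K A : Type*} [CommSemiring K] [Semiring A] [Algebra K A]

theorem pow_mul_pow_of_mul_eq_smul_mul {q : K} {u v : A} (h : v * u = q • (u * v)) (b c : ℕ) :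
    v ^ b * u ^ c = q ^ (b * c) • (u ^ c * v ^ b) := by
  have semiconj_u : SemiconjBy v u (q • u) := h.trans (smul_mul_assoc q u v).symm
  have semiconj_v : SemiconjBy (u ^ c) (q ^ c • v) v := by
    rw [SemiconjBy, (semiconj_u.pow_right c).eq, smul_pow, smul_mul_assoc, mul_smul_comm]
  rw [← (semiconj_v.pow_right b).eq, smul_pow, mul_smul_comm, ← pow_mul, mul_comm c]

theorem monomial_mul_monomial_of_mul_eq_smul_mul {q : K} {u v : A} (h : v * u = q • (u * v))
    (a b c d : ℕ) :
    (u ^ a * v ^ b) * (u ^ c * v ^ d) = q ^ (b * c) • (u ^ (a + c) * v ^ (b + d)) := by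
  rw [mul_assoc, ← mul_assoc (v ^ b), pow_mul_pow_of_mul_eq_smul_mul h, smul_mul_assoc,
    mul_smul_comm, pow_add, pow_add]
  simp only [mul_assoc]

/-- The map `x ↦ x + g x` attached to an algebra endomorphism `g`: the sum over the `g`-orbit
`{x, g x}` of an element with `g² x = x`. -/
def pairTrace (g : A →ₐ[K] A) : A →ₗ[K] A := LinearMap.id + g.toLinearMap

theorem pairTrace_apply (g : A →ₐ[K] A) (x : A) : pairTrace g x = x + g x := rfl

theorem pairTrace_map (g : A →ₐ[K] A) {x : A} (hx : g (g x) = x) :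
    pairTrace g (g x) = pairTrace g x := by
  rw [pairTrace_apply, pairTrace_apply, hx, add_comm]

theorem pairTrace_mul_pairTrace (g : A →ₐ[K] A) (x : A) {y : A} (hy : g (g y) = y) :
    pairTrace g x * pairTrace g y = pairTrace g (x * y) + pairTrace g (x * g y) := by
  simp only [pairTrace_apply, map_mul, hy, add_mul, mul_add]
  abel

end GeneralAlgebra

theorem lam_pow_eq_one_of_dvd {n k : ℕ} (h : n ∣ k) : lam n ^ k = 1 := by
  obtain rfl | hn := eq_or_ne n 0
  · rw [zero_dvd_iff.mp h, pow_zero]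
  · exact ((Complex.isPrimitiveRoot_exp n hn).pow_eq_one_iff_dvd k).mpr h

theorem uGen_mul_vGen_add_vGen_mul_uGen : uGen * vGen + vGen * uGen = 0 := by
  simpa only [uGen, vGen, map_add, map_mul, map_zero] using
    RingQuot.mkAlgHom_rel ℂ SkewRel.rel

theorem vGen_mul_uGen : vGen * uGen = (-1 : ℂ) • (uGen * vGen) :=
  (eq_neg_of_add_eq_zero_right uGen_mul_vGen_add_vGen_mul_uGen).trans (neg_one_smul ℂ _).symm

/-- The generator `g` of the group `G`, with `g u = v` and `g v = λ u`, encoded as an algebra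
homomorphism rather than an automorphism; orbit sums are its traces `x + g x` on monomials. -/
def skewSwap (n : ℕ) : SkewAlg →ₐ[ℂ] SkewAlg :=
  RingQuot.liftAlgHom ℂ ⟨FreeAlgebra.lift ℂ ![vGen, lam n • uGen], by
    rintro _ _ ⟨⟩
    simp [← smul_add, add_comm (vGen * uGen), uGen_mul_vGen_add_vGen_mul_uGen]⟩

theorem skewSwap_uGen (n : ℕ) : skewSwap n uGen = vGen := by
  simp [skewSwap, uGen]

theorem skewSwap_vGen (n : ℕ) : skewSwap n vGen = lam n • uGen := by
  simp [skewSwap, vGen]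

theorem skewSwap_monomial (n a b : ℕ) :
    skewSwap n (uGen ^ a * vGen ^ b) =
      ((-1 : ℂ) ^ (a * b) * lam n ^ b) • (uGen ^ b * vGen ^ a) := by
  rw [map_mul, map_pow, map_pow, skewSwap_uGen, skewSwap_vGen, smul_pow, mul_smul_comm,
    pow_mul_pow_of_mul_eq_smul_mul vGen_mul_uGen, smul_smul, mul_comm (lam n ^ b)]

theorem skewSwap_skewSwap_monomial {n a b : ℕ} (h : n ∣ a + b) :
    skewSwap n (skewSwap n (uGen ^ a * vGen ^ b)) = uGen ^ a * vGen ^ b := by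
  have square_apply : skewSwap n (skewSwap n (uGen ^ a * vGen ^ b)) =
      lam n ^ (a + b) • (uGen ^ a * vGen ^ b) := by
    simp only [map_mul, map_pow, map_smul, skewSwap_uGen, skewSwap_vGen, smul_pow,
      smul_mul_smul_comm, pow_add]
  rw [square_apply, lam_pow_eq_one_of_dvd h, one_smul]

theorem orbitSum_eq_pairTrace (n a b : ℕ) :
    orbitSum n a b = pairTrace (skewSwap n) (uGen ^ a * vGen ^ b) := by
  rw [pairTrace_apply, skewSwap_monomial, orbitSum]

theorem orbitSum_eq_smul_orbitSum_swap {n a b : ℕ} (h : n ∣ a + b) :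
    orbitSum n a b = ((-1 : ℂ) ^ (a * b) * lam n ^ b) • orbitSum n b a := by
  rw [orbitSum_eq_pairTrace, ← pairTrace_map _ (skewSwap_skewSwap_monomial h), skewSwap_monomial,
    map_smul, ← orbitSum_eq_pairTrace]

theorem orbitSum_mul_orbitSum {n c d : ℕ} (a b : ℕ) (h : n ∣ c + d) :
    orbitSum n a b * orbitSum n c d =
      ((-1 : ℂ) ^ (b * c)) • orbitSum n (a + c) (b + d) +
        ((-1 : ℂ) ^ ((b + c) * d) * lam n ^ d) • orbitSum n (a + d) (b + c) := by
  have mul_monomial (c d : ℕ) : (uGen ^ a * vGen ^ b) * (uGen ^ c * vGen ^ d) =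
      ((-1 : ℂ) ^ (b * c)) • (uGen ^ (a + c) * vGen ^ (b + d)) :=
    monomial_mul_monomial_of_mul_eq_smul_mul vGen_mul_uGen a b c d
  simp only [orbitSum_eq_pairTrace]
  rw [pairTrace_mul_pairTrace _ _ (skewSwap_skewSwap_monomial h), skewSwap_monomial,
    mul_smul_comm, mul_monomial, mul_monomial, smul_smul, map_smul, map_smul,
    mul_right_comm, ← pow_add, ← add_mul, add_comm c b]

theorem orbitSum_mul_orbitSum_of_odd {n c d : ℕ} (a b : ℕ) (h : n ∣ c + d) (hodd : Odd (c + d)) :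
    orbitSum n a b * orbitSum n c d =
      ((-1 : ℂ) ^ (b * (d + 1))) • orbitSum n (a + c) (b + d) +
        ((-1 : ℂ) ^ (b * d) * lam n ^ d) • orbitSum n (a + d) (b + c) := by
  have first_sign : (-1 : ℂ) ^ (b * c) = (-1) ^ (b * (d + 1)) :=
    neg_one_pow_congr (by grind)
  have second_sign : (-1 : ℂ) ^ ((b + c) * d) = (-1) ^ (b * d) :=
    neg_one_pow_congr (by grind)
  rw [orbitSum_mul_orbitSum a b h, first_sign, second_sign]

theorem orbitSum_mul_orbitSum_of_even {n c d : ℕ} (a b : ℕ) (h : n ∣ c + d)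
    (heven : Even (c + d)) :
    orbitSum n a b * orbitSum n c d =
      ((-1 : ℂ) ^ (b * d)) • orbitSum n (a + c) (b + d) +
        ((-1 : ℂ) ^ (d * (b + 1)) * lam n ^ d) • orbitSum n (a + d) (b + c) := by
  have first_sign : (-1 : ℂ) ^ (b * c) = (-1) ^ (b * d) :=
    neg_one_pow_congr (by grind)
  have second_sign : (-1 : ℂ) ^ ((b + c) * d) = (-1) ^ (d * (b + 1)) :=
    neg_one_pow_congr (by grind)
  rw [orbitSum_mul_orbitSum a b h, first_sign, second_sign]

theorem lam_pow_smul_orbitSum_swap {n a b c d : ℕ} (hab : n ∣ a + b) (hcd : n ∣ c + d)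
    (hodd : Odd (a + b + (c + d))) :
    lam n ^ d • orbitSum n (a + d) (b + c) = lam n ^ b • orbitSum n (b + c) (a + d) := by
  have hdvd : n ∣ b + c + (a + d) := by
    rw [add_add_add_comm, add_comm b a]
    exact dvd_add hab hcd
  have hpar : Even ((b + c) * (a + d)) := by grind
  have lam_pow_eq : lam n ^ b * lam n ^ (a + d) = lam n ^ d := by
    rw [← pow_add, ← add_assoc, add_comm b a, pow_add, lam_pow_eq_one_of_dvd hab, one_mul]
  rw [orbitSum_eq_smul_orbitSum_swap hdvd, hpar.neg_one_pow, one_mul, smul_smul, lam_pow_eq]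

theorem orbitSum_two_n_mul_n_general (n : ℕ) (hodd : Odd n) (i j : ℕ)
    (hi : i ≤ 2 * n) (hj : j ≤ n) :
    (orbitSum n (2 * n - i) i * orbitSum n (n - j) j =
      ((-1 : ℂ) ^ (i * (j + 1))) • orbitSum n (3 * n - i - j) (i + j) +
        ((-1 : ℂ) ^ (i * j) * lam n ^ j) • orbitSum n (2 * n - i + j) (n + i - j)) ∧
    (orbitSum n (2 * n - i) i * orbitSum n (n - j) j =
      ((-1 : ℂ) ^ (i * (j + 1))) • orbitSum n (3 * n - i - j) (i + j) +
        ((-1 : ℂ) ^ (i * j) * lam n ^ i) • orbitSum n (n + i - j) (2 * n + j - i)) ∧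
    (orbitSum n (n - j) j * orbitSum n (2 * n - i) i =
      ((-1 : ℂ) ^ (i * j)) • orbitSum n (3 * n - i - j) (i + j) +
        ((-1 : ℂ) ^ (i * (j + 1)) * lam n ^ j) • orbitSum n (2 * n - i + j) (n + i - j)) ∧
    (orbitSum n (n - j) j * orbitSum n (2 * n - i) i =
      ((-1 : ℂ) ^ (i * j)) • orbitSum n (3 * n - i - j) (i + j) +
        ((-1 : ℂ) ^ (i * (j + 1)) * lam n ^ i) • orbitSum n (n + i - j) (2 * n + j - i)) := by
  obtain ⟨p, hp⟩ := Nat.exists_eq_add_of_le' hi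
  obtain ⟨c, hc⟩ := Nat.exists_eq_add_of_le' hj
  have hpi : n ∣ p + i := hp ▸ dvd_mul_left n 2
  have hcj : n ∣ c + j := hc ▸ dvd_rfl
  have hpi_even : Even (p + i) := hp ▸ even_two_mul n
  have hcj_odd : Odd (c + j) := hc ▸ hodd
  have swap := lam_pow_smul_orbitSum_swap hpi hcj (hpi_even.add_odd hcj_odd)
  have left := orbitSum_mul_orbitSum_of_odd p i hcj hcj_odd
  have right := orbitSum_mul_orbitSum_of_even c j hpi hpi_even
  rw [mul_comm j i, add_comm c p, add_comm j i, add_comm c i, add_comm j p] at right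
  rw [show 2 * n - i = p by omega, show n - j = c by omega,
    show 3 * n - i - j = p + c by omega, show n + i - j = i + c by omega,
    show 2 * n + j - i = p + j by omega]
  simp only [mul_smul, swap] at left right ⊢
  exact ⟨left, left, right, right⟩

/-- For `n` odd, the products of an orbit sum of degree `2n` with one of degree
`n`, in both orders (Lemma 2.3 of the paper).  The sign `(-1)^(i(j-1))` of the
paper is written `(-1)^(i(j+1))`, which is equal to it; the conditions
`i - j < n/2` and `i - j > n/2` are stated in `ℤ` as `2(i-j) < n`, `2(i-j) > n`. -/
theorem orbitSum_two_n_mul_n (n : ℕ) (hodd : Odd n) (i j : ℕ)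
    (hi : i ≤ n) (hj : j ≤ (n - 1) / 2) :
    (2 * ((i : ℤ) - (j : ℤ)) < (n : ℤ) →
      orbitSum n (2 * n - i) i * orbitSum n (n - j) j =
        ((-1 : ℂ) ^ (i * (j + 1))) • orbitSum n (3 * n - i - j) (i + j) +
          ((-1 : ℂ) ^ (i * j) * lam n ^ j) • orbitSum n (2 * n - i + j) (n + i - j)) ∧
    (2 * ((i : ℤ) - (j : ℤ)) > (n : ℤ) →
      orbitSum n (2 * n - i) i * orbitSum n (n - j) j =
        ((-1 : ℂ) ^ (i * (j + 1))) • orbitSum n (3 * n - i - j) (i + j) +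
          ((-1 : ℂ) ^ (i * j) * lam n ^ i) • orbitSum n (n + i - j) (2 * n + j - i)) ∧
    (2 * ((i : ℤ) - (j : ℤ)) < (n : ℤ) →
      orbitSum n (n - j) j * orbitSum n (2 * n - i) i =
        ((-1 : ℂ) ^ (i * j)) • orbitSum n (3 * n - i - j) (i + j) +
          ((-1 : ℂ) ^ (i * (j + 1)) * lam n ^ j) • orbitSum n (2 * n - i + j) (n + i - j)) ∧
    (2 * ((i : ℤ) - (j : ℤ)) > (n : ℤ) →
      orbitSum n (n - j) j * orbitSum n (2 * n - i) i =
        ((-1 : ℂ) ^ (i * j)) • orbitSum n (3 * n - i - j) (i + j) +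
          ((-1 : ℂ) ^ (i * (j + 1)) * lam n ^ i) • orbitSum n (n + i - j) (2 * n + j - i)) := by
  obtain ⟨left, left_swapped, right, right_swapped⟩ :=
    orbitSum_two_n_mul_n_general n hodd i j (by omega) (by omega)
  exact ⟨fun _ => left, fun _ => left_swapped, fun _ => right, fun _ => right_swapped⟩
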